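/- Let u be an information structure on K × (C×C₁) × D and v = marg_{K×C×D}u. If under u the signal c₁ is ε-conditionally independent from (k, d) given c, then sup_{g∈𝒢}(val(u,g) − val(v,g)) ≤ ε. -/

import Mathlib

open scoped BigOperators ENNReal

namespace ValueDistance

/-- An information structure: a probability distribution on `K × ℕ × ℕ`
(state, signal of player 1, signal of player 2). -/
abbrev InfoStruct (K : Type) := PMF (K × ℕ × ℕ)

/-- A behavior strategy / garbling : a map `ℕ → Δ(ℕ)`. -/
abbrev Garbling : Type := ℕ → PMF ℕ

variable {K : Type}

/-- `g` is a payoff function with action bound `L` : values in `[-1,1]`,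
`g k i j = -1` when `i ≥ L`, and `g k i j = 1` when `i < L` and `j ≥ L`. -/
def IsPayoffL (L : ℕ) (g : K → ℕ → ℕ → ℝ) : Prop :=
  (∀ k i j, g k i j ∈ Set.Icc (-1 : ℝ) 1) ∧
  (∀ k i j, L ≤ i → g k i j = -1) ∧
  (∀ k i j, i < L → L ≤ j → g k i j = 1)

/-- `g` belongs to the set `𝒢` of payoff functions. -/
def IsPayoff (g : K → ℕ → ℕ → ℝ) : Prop := ∃ L, IsPayoffL L g

/-- `g` belongs to the set `𝒢₁` of single-agent (player 1) problems. -/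
def IsPayoff1 (g : K → ℕ → ℕ → ℝ) : Prop :=
  IsPayoff g ∧ ∀ k i j j', g k i j = g k i j'

/-- Expected payoff in the Bayesian game `Γ(u,g)` when player 1 uses the behavior
strategy `σ` and player 2 uses `τ`. -/
noncomputable def payoff (u : InfoStruct K) (g : K → ℕ → ℕ → ℝ)
    (σ τ : Garbling) : ℝ :=
  ∑' (x : K × ℕ × ℕ) (i : ℕ) (j : ℕ),
    (u x).toReal * (σ x.2.1 i).toReal * (τ x.2.2 j).toReal * g x.1 i j

/-- The value `val(u,g)` of the zero-sum Bayesian game `Γ(u,g)`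
(the common value of `sup inf` and `inf sup` of the expected payoff;
we take `sup inf` as the definition). -/
noncomputable def val (u : InfoStruct K) (g : K → ℕ → ℕ → ℝ) : ℝ :=
  ⨆ σ : Garbling, ⨅ τ : Garbling, payoff u g σ τ

/-- Total variation distance `‖u − v‖`. -/
noncomputable def tv {α : Type} (u v : PMF α) : ℝ :=
  ∑' x : α, |(u x).toReal - (v x).toReal|

/-- `q.u` : player 1's signal garbled through `q`. -/
noncomputable def garbleLeft (q : Garbling) (u : InfoStruct K) : InfoStruct K :=
  u.bind (fun x => (q x.2.1).map (fun c => (x.1, c, x.2.2)))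

/-- `u.q` : player 2's signal garbled through `q`. -/
noncomputable def garbleRight (u : InfoStruct K) (q : Garbling) : InfoStruct K :=
  u.bind (fun x => (q x.2.2).map (fun d => (x.1, x.2.1, d)))

/-- The value-based distance `d(u,v) = sup_{g ∈ 𝒢} |val(u,g) − val(v,g)|`. -/
noncomputable def dVal (u v : InfoStruct K) : ℝ :=
  ⨆ g : {g : K → ℕ → ℕ → ℝ // IsPayoff g}, |val u g.1 - val v g.1|

/-- The single-agent distance `d₁(u,v) = sup_{g ∈ 𝒢₁} |val(u,g) − val(v,g)|`. -/
noncomputable def d1 (u v : InfoStruct K) : ℝ :=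
  ⨆ g : {g : K → ℕ → ℕ → ℝ // IsPayoff1 g}, |val u g.1 - val v g.1|

/-- Marginal of an information structure on `K × ℕ` (state, player 1's signal). -/
noncomputable def marg1 (u : InfoStruct K) : PMF (K × ℕ) :=
  u.map (fun x => (x.1, x.2.1))

/-- Garbling of a single-agent information structure:
`(q.w)(k,c) = Σ_s w(k,s)·q(s)({c})`. -/
noncomputable def garble1 (q : Garbling) (w : PMF (K × ℕ)) : PMF (K × ℕ) :=
  w.bind (fun x => (q x.2).map (fun c => (x.1, c)))

/-- Marginal of an information structure on the states. -/
noncomputable def margK (u : InfoStruct K) : PMF K := u.map Prod.fst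

/-- Marginal of an information structure on `K × ℕ` (state, player 2's signal). -/
noncomputable def margKD (u : InfoStruct K) : PMF (K × ℕ) :=
  u.map (fun x => (x.1, x.2.2))

/-- `σ.q` : on signal `c`, draw `c'` according to `q(c)` and play `σ(c')`. -/
noncomputable def compGarble (σ q : Garbling) : Garbling :=
  fun c => (q c).bind σ

/-- `u ∈ 𝒰(L)` : both players' signals are `< L` with probability 1. -/
def InU (L : ℕ) (u : InfoStruct K) : Prop :=
  ∀ x : K × ℕ × ℕ, u x ≠ 0 → x.2.1 < L ∧ x.2.2 < L

/-- `q ∈ 𝒬(L)` : garbling with values supported on `{0,…,L−1}`. -/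
def GarblingIn (L : ℕ) (q : Garbling) : Prop :=
  ∀ n m, q n m ≠ 0 → m < L

/-- The two players' signals are conditionally independent given the state:
`u(k)·u(k,c,d) = u(k,c)·u(k,d)` for all `k, c, d`
(equivalently `u(c,d|k) = u(c|k)·u(d|k)` whenever `u(k) > 0`). -/
def CondIndep (u : InfoStruct K) : Prop :=
  ∀ (k : K) (c d : ℕ),
    (∑' y : ℕ × ℕ, u (k, y)) * u (k, c, d)
      = (∑' d' : ℕ, u (k, c, d')) * (∑' c' : ℕ, u (k, c', d))

end ValueDistance

/-!
Let `v` be the law of `(k, c, d)` and let `v'` be the law of `(k, (c, c₁), d)` when `c₁` is redrawn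
from its conditional law given `c`. Player 1 can produce `c₁` privately in the game with signal `c`,
so `v'` is a garbling of `v` by player 1 and `val v' ≤ val v`. Since payoffs lie in `[-1, 1]`, the
values of the original structure and of `v'` differ by at most their total variation distance, which
is exactly the sum measuring conditional dependence.
-/

namespace ValueDistance

section Expectation

variable {α β : Type*}

/-- The expectation of `f` under the discrete law `p`. It is written as a series of reals, without
measurable structures on the signal spaces; it is meaningful for bounded `f`. -/
noncomputable def expect (p : PMF α) (f : α → ℝ) : ℝ :=
  ∑' a, (p a).toReal * f a

theorem summable_toReal (p : PMF α) : Summable fun a => (p a).toReal :=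
  ENNReal.summable_toReal p.tsum_coe_ne_top

theorem tsum_toReal (p : PMF α) : ∑' a, (p a).toReal = 1 := by
  rw [← ENNReal.tsum_toReal_eq p.apply_ne_top, p.tsum_coe, ENNReal.toReal_one]

theorem summable_toReal_mul (p : PMF α) {f : α → ℝ} {M : ℝ} (hf : ∀ a, |f a| ≤ M) :
    Summable fun a => (p a).toReal * f a :=
  .of_norm_bounded ((summable_toReal p).abs.mul_right M) fun a => norm_mul_le_of_le le_rfl (hf a)

theorem abs_expect_le (p : PMF α) {f : α → ℝ} {M : ℝ} (hf : ∀ a, |f a| ≤ M) :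
    |expect p f| ≤ M := by
  have hsum : HasSum (fun a => |(p a).toReal| * M) M := by
    simpa only [abs_of_nonneg ENNReal.toReal_nonneg, tsum_toReal, one_mul] using
      (summable_toReal p).hasSum.mul_right M
  exact tsum_of_norm_bounded (f := fun a => (p a).toReal * f a) hsum fun a =>
    norm_mul_le_of_le le_rfl (hf a)

theorem expect_pure (a : α) (f : α → ℝ) : expect (PMF.pure a) f = f a := by
  rw [expect, tsum_eq_single a fun b hb => by simp [hb]]
  simp

theorem expect_bind (p : PMF α) (q : α → PMF β) {f : β → ℝ} {M : ℝ} (hf : ∀ b, |f b| ≤ M) :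
    expect (p.bind q) f = expect p fun a => expect (q a) f := by
  have hjoint : Summable fun x : β × α => (p x.2 * q x.2 x.1).toReal := by
    apply ENNReal.summable_toReal
    rw [ENNReal.tsum_prod', ENNReal.tsum_comm]
    simp [ENNReal.tsum_mul_left, PMF.tsum_coe]
  have hsummable : Summable fun x : β × α => (p x.2 * q x.2 x.1).toReal * f x.1 :=
    .of_norm_bounded (hjoint.abs.mul_right M) fun x => norm_mul_le_of_le le_rfl (hf x.1)
  calc expect (p.bind q) f
      = ∑' b, ∑' a, (p a * q a b).toReal * f b := by
        refine tsum_congr fun b => ?_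
        rw [PMF.bind_apply, ENNReal.tsum_toReal_eq fun a =>
          ENNReal.mul_ne_top (p.apply_ne_top a) ((q a).apply_ne_top b), tsum_mul_right]
    _ = ∑' a, ∑' b, (p a * q a b).toReal * f b :=
        (Summable.tsum_comm (f := fun b a => (p a * q a b).toReal * f b) hsummable).symm
    _ = expect p fun a => expect (q a) f := by
        simp only [expect, ENNReal.toReal_mul, mul_assoc, tsum_mul_left]

theorem expect_map (p : PMF α) (φ : α → β) {f : β → ℝ} {M : ℝ} (hf : ∀ b, |f b| ≤ M) :
    expect (p.map φ) f = expect p fun a => f (φ a) := by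
  simp only [← PMF.bind_pure_comp, expect_bind _ _ hf, Function.comp_apply, expect_pure]

theorem summable_abs_toReal_sub (p q : PMF α) :
    Summable fun a => |(p a).toReal - (q a).toReal| :=
  ((summable_toReal p).sub (summable_toReal q)).abs

theorem tv_nonneg {α : Type} (p q : PMF α) : 0 ≤ tv p q :=
  tsum_nonneg fun _ => abs_nonneg _

theorem expect_sub_expect_le_mul_tv {α : Type} (p q : PMF α) {f : α → ℝ} {M : ℝ}
    (hf : ∀ a, |f a| ≤ M) : expect p f - expect q f ≤ M * tv p q := by
  have hp := summable_toReal_mul p hf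
  have hq := summable_toReal_mul q hf
  rw [expect, expect, ← hp.tsum_sub hq, tv, ← tsum_mul_left]
  refine (hp.sub hq).tsum_le_tsum (fun a => ?_) ((summable_abs_toReal_sub p q).mul_left M)
  calc (p a).toReal * f a - (q a).toReal * f a
      ≤ |((p a).toReal - (q a).toReal) * f a| := by rw [← sub_mul]; exact le_abs_self _
    _ ≤ M * |(p a).toReal - (q a).toReal| := by
        rw [abs_mul, mul_comm]
        exact mul_le_mul_of_nonneg_right (hf a) (abs_nonneg _)

end Expectation

section Game

variable {K : Type} {g : K → ℕ → ℕ → ℝ} {M : ℝ}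

theorem IsPayoff.abs_le_one (hg : IsPayoff g) (k : K) (i j : ℕ) : |g k i j| ≤ 1 :=
  let ⟨_, hL⟩ := hg
  abs_le.2 (hL.1 k i j)

theorem payoff_eq_expect (u : InfoStruct K) (g : K → ℕ → ℕ → ℝ) (σ τ : Garbling) :
    payoff u g σ τ =
      expect u fun x => expect (σ x.2.1) fun i => expect (τ x.2.2) fun j => g x.1 i j := by
  simp only [payoff, expect, ← tsum_mul_left, mul_assoc]

theorem abs_payoff_le (hg : ∀ k i j, |g k i j| ≤ M) (u : InfoStruct K) (σ τ : Garbling) :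
    |payoff u g σ τ| ≤ M := by
  rw [payoff_eq_expect]
  exact abs_expect_le _ fun x => abs_expect_le _ fun i => abs_expect_le _ (hg x.1 i)

theorem bddBelow_range_payoff (hg : ∀ k i j, |g k i j| ≤ M) (u : InfoStruct K) (σ : Garbling) :
    BddBelow (Set.range (payoff u g σ)) :=
  ⟨-M, Set.forall_mem_range.2 fun τ => (abs_le.1 (abs_payoff_le hg u σ τ)).1⟩

theorem bddAbove_range_iInf_payoff (hg : ∀ k i j, |g k i j| ≤ M) (u : InfoStruct K) :
    BddAbove (Set.range fun σ : Garbling => ⨅ τ : Garbling, payoff u g σ τ) :=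
  ⟨M, Set.forall_mem_range.2 fun σ =>
    (ciInf_le (bddBelow_range_payoff hg u σ) fun _ => PMF.pure 0).trans
      (abs_le.1 (abs_payoff_le hg u σ _)).2⟩

theorem val_le_val_add_of_forall_payoff_le (hg : ∀ k i j, |g k i j| ≤ M) {u v : InfoStruct K}
    {δ : ℝ} (φ : Garbling → Garbling) (h : ∀ σ τ, payoff u g σ τ ≤ payoff v g (φ σ) τ + δ) :
    val u g ≤ val v g + δ := by
  have : Nonempty Garbling := ⟨fun _ => PMF.pure 0⟩
  refine ciSup_le fun σ => ?_
  rw [← sub_le_iff_le_add]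
  refine le_trans (le_ciInf fun τ => ?_) (le_ciSup (bddAbove_range_iInf_payoff hg v) (φ σ))
  rw [sub_le_iff_le_add]
  exact (ciInf_le (bddBelow_range_payoff hg u σ) τ).trans (h σ τ)

theorem val_le_val_add_mul_tv (hg : ∀ k i j, |g k i j| ≤ M) (u v : InfoStruct K) :
    val u g ≤ val v g + M * tv u v := by
  refine val_le_val_add_of_forall_payoff_le hg id fun σ τ => ?_
  rw [← sub_le_iff_le_add', payoff_eq_expect, payoff_eq_expect]
  exact expect_sub_expect_le_mul_tv u v fun x =>
    abs_expect_le _ fun i => abs_expect_le _ (hg x.1 i)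

theorem payoff_garbleLeft (hg : ∀ k i j, |g k i j| ≤ M) (q : Garbling) (u : InfoStruct K)
    (σ τ : Garbling) : payoff (garbleLeft q u) g σ τ = payoff u g (compGarble σ q) τ := by
  have hτ (k : K) (d i : ℕ) : |expect (τ d) (g k i)| ≤ M := abs_expect_le _ (hg k i)
  have hστ (x : K × ℕ × ℕ) : |expect (σ x.2.1) fun i => expect (τ x.2.2) (g x.1 i)| ≤ M :=
    abs_expect_le _ (hτ x.1 x.2.2)
  simp only [payoff_eq_expect, garbleLeft, compGarble]
  rw [expect_bind _ _ hστ]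
  congr 1
  funext x
  rw [expect_map _ _ hστ, expect_bind _ _ (hτ x.1 x.2.2)]

theorem val_garbleLeft_le (hg : ∀ k i j, |g k i j| ≤ M) (q : Garbling) (u : InfoStruct K) :
    val (garbleLeft q u) g ≤ val u g := by
  simpa only [add_zero] using val_le_val_add_of_forall_payoff_le (δ := 0) hg (compGarble · q)
    fun σ τ => (payoff_garbleLeft hg q u σ τ).le.trans_eq (add_zero _).symm

end Game

section PointMasses

variable {α β γ : Type*}

theorem map_apply_of_injective (p : PMF α) {φ : α → β} (hφ : Function.Injective φ) (a : α) :
    p.map φ (φ a) = p a := by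
  classical
  simp [PMF.map_apply, hφ.eq_iff]

theorem map_apply_eq_tsum_of_fiber (p : PMF α) {φ : α → β} {b : β} {ι : γ → α}
    (hι : Function.Injective ι) (hfiber : ∀ a, b = φ a ↔ a ∈ Set.range ι) :
    p.map φ b = ∑' c, p (ι c) := by
  classical
  simp only [PMF.map_apply, hfiber]
  rw [← hι.tsum_eq fun a ha => (ite_ne_right_iff.1 ha).1]
  simp only [Set.mem_range_self, if_true]

theorem garbleLeft_apply {K : Type} (q : Garbling) (u : InfoStruct K) (k : K) (c d : ℕ) :
    garbleLeft q u (k, c, d) = ∑' c', u (k, c', d) * q c' c := by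
  classical
  have hι : Function.Injective fun c' : ℕ => (k, c', d) := fun _ _ h => by simpa using h
  rw [garbleLeft, PMF.bind_apply, ← hι.tsum_eq]
  · exact tsum_congr fun c' => by rw [map_apply_of_injective (q c') hι]
  · rintro ⟨k', c', d'⟩ hx
    obtain ⟨-, rfl, rfl, -⟩ : u (k', c', d') ≠ 0 ∧ k = k' ∧ d = d' ∧ q c' c ≠ 0 := by
      simpa [PMF.map_apply] using hx
    exact ⟨c', rfl⟩

end PointMasses

section ConditionalLaw

variable {α β : Type*}

open Classical in
/-- The conditional law of the second coordinate under `p` given that the first one is `a`. When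
`a` has probability zero it is set to the marginal law of the second coordinate. -/
noncomputable def condSnd (p : PMF (α × β)) (a : α) : PMF β :=
  if h : ∑' b, p (a, b) = 0 then p.map Prod.snd
  else PMF.normalize (fun b => p (a, b)) h <| ne_top_of_le_ne_top p.tsum_coe_ne_top <|
    ENNReal.tsum_comp_le_tsum_of_injective (Prod.mk_right_injective a) p

theorem condSnd_apply (p : PMF (α × β)) {a : α} (h : ∑' b, p (a, b) ≠ 0) (b : β) :
    condSnd p a b = p (a, b) / ∑' b', p (a, b') := by
  rw [condSnd, dif_neg h, PMF.normalize_apply, div_eq_mul_inv]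

end ConditionalLaw

section AdditionalSignal

variable {K : Type}

/-- The structure `u`: player 1 observes both `c` and `c₁`, encoded in `ℕ` by `Nat.pair`. -/
noncomputable def withSignal (w : PMF (K × (ℕ × ℕ) × ℕ)) : InfoStruct K :=
  w.map fun x => (x.1, Nat.pair x.2.1.1 x.2.1.2, x.2.2)

/-- The structure `v`: the additional signal `c₁` of player 1 is dropped. -/
noncomputable def withoutSignal (w : PMF (K × (ℕ × ℕ) × ℕ)) : InfoStruct K :=
  w.map fun x => (x.1, x.2.1.1, x.2.2)

/-- The joint law of the two signals `(c, c₁)` of player 1. -/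
noncomputable def signalLaw (w : PMF (K × (ℕ × ℕ) × ℕ)) : PMF (ℕ × ℕ) :=
  w.map fun x => x.2.1

/-- The garbling by which player 1, knowing only `c`, draws `c₁` from its conditional law given `c`
and then observes the code of `(c, c₁)`. -/
noncomputable def simulateSignal (w : PMF (K × (ℕ × ℕ) × ℕ)) : Garbling :=
  fun c => (condSnd (signalLaw w) c).map (Nat.pair c)

theorem withSignal_apply (w : PMF (K × (ℕ × ℕ) × ℕ)) (k : K) (c c₁ d : ℕ) :
    withSignal w (k, Nat.pair c c₁, d) = w (k, (c, c₁), d) := by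
  refine map_apply_of_injective w (φ := fun x => (x.1, Nat.pair x.2.1.1 x.2.1.2, x.2.2)) ?_
    (k, (c, c₁), d)
  rintro ⟨k, ⟨c, c₁⟩, d⟩ ⟨k', ⟨c', c₁'⟩, d'⟩ h
  simpa [Nat.pair_eq_pair] using h

theorem withoutSignal_apply (w : PMF (K × (ℕ × ℕ) × ℕ)) (k : K) (c d : ℕ) :
    withoutSignal w (k, c, d) = ∑' c₁, w (k, (c, c₁), d) := by
  refine map_apply_eq_tsum_of_fiber w (ι := fun c₁ => (k, (c, c₁), d)) ?_ ?_
  · intro c₁ c₁' h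
    simpa using h
  · rintro ⟨k', ⟨c', c₁'⟩, d'⟩
    simp [eq_comm]

theorem signalLaw_apply (w : PMF (K × (ℕ × ℕ) × ℕ)) (c c₁ : ℕ) :
    signalLaw w (c, c₁) = ∑' (k : K) (d : ℕ), w (k, (c, c₁), d) := by
  rw [← ENNReal.tsum_prod]
  refine map_apply_eq_tsum_of_fiber w (ι := fun y : K × ℕ => (y.1, (c, c₁), y.2)) ?_ ?_
  · intro y y' h
    simpa [Prod.ext_iff] using h
  · rintro ⟨k', ⟨c', c₁'⟩, d'⟩
    simp [eq_comm]

theorem simulateSignal_apply (w : PMF (K × (ℕ × ℕ) × ℕ)) (c c' c₁ : ℕ) :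
    simulateSignal w c' (Nat.pair c c₁) =
      if c' = c then condSnd (signalLaw w) c c₁ else 0 := by
  split_ifs with h
  · subst h
    exact map_apply_of_injective _ (fun _ _ h => (Nat.pair_eq_pair.1 h).2) c₁
  · simp [simulateSignal, PMF.map_apply, Nat.pair_eq_pair, Ne.symm h]

theorem garbleLeft_simulateSignal_apply (w : PMF (K × (ℕ × ℕ) × ℕ)) (k : K) (c c₁ d : ℕ) :
    garbleLeft (simulateSignal w) (withoutSignal w) (k, Nat.pair c c₁, d) =
      (∑' c₁', w (k, (c, c₁'), d)) * condSnd (signalLaw w) c c₁ := by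
  rw [garbleLeft_apply, tsum_eq_single c fun c' h => by simp [simulateSignal_apply, h],
    simulateSignal_apply, if_pos rfl, withoutSignal_apply]

theorem toReal_garbleLeft_simulateSignal_apply (w : PMF (K × (ℕ × ℕ) × ℕ)) (k : K)
    (c c₁ d : ℕ) :
    (garbleLeft (simulateSignal w) (withoutSignal w) (k, Nat.pair c c₁, d)).toReal =
      (∑' (k' : K) (d' : ℕ), w (k', (c, c₁), d')).toReal
        * (∑' c₁' : ℕ, w (k, (c, c₁'), d)).toReal
        / (∑' (k' : K) (c₁' : ℕ) (d' : ℕ), w (k', (c, c₁'), d')).toReal := by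
  have hmass : ∑' c₁', signalLaw w (c, c₁') =
      ∑' (k' : K) (c₁' : ℕ) (d' : ℕ), w (k', (c, c₁'), d') := by
    simp only [signalLaw_apply]
    exact ENNReal.tsum_comm
  rw [garbleLeft_simulateSignal_apply]
  by_cases h : ∑' c₁', signalLaw w (c, c₁') = 0
  · have hzero : ∑' c₁', w (k, (c, c₁'), d) = 0 := by
      simp only [signalLaw_apply, ENNReal.tsum_eq_zero] at h ⊢
      exact fun c₁' => h c₁' k d
    simp [hzero]
  · rw [condSnd_apply _ h, hmass, signalLaw_apply, ENNReal.toReal_mul, ENNReal.toReal_div]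
    ring

theorem tv_eq_tsum_pair (u v : InfoStruct K) :
    tv u v = ∑' (c : ℕ) (k : K) (d : ℕ) (c₁ : ℕ),
      |(u (k, Nat.pair c c₁, d)).toReal - (v (k, Nat.pair c c₁, d)).toReal| := by
  let e : ℕ × K × ℕ × ℕ ≃ K × ℕ × ℕ :=
    { toFun := fun y => (y.2.1, Nat.pair y.1 y.2.2.2, y.2.2.1)
      invFun := fun x => (x.2.1.unpair.1, x.1, x.2.2, x.2.1.unpair.2)
      left_inv := fun y => by simp
      right_inv := fun x => by simp }
  have hs := e.summable_iff.2 (summable_abs_toReal_sub u v)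
  rw [tv, ← e.tsum_eq]
  exact hs.tsum_prod.trans <| tsum_congr fun c =>
    (hs.prod_factor c).tsum_prod.trans <| tsum_congr fun k =>
      ((hs.prod_factor c).prod_factor k).tsum_prod

theorem tv_withSignal_simulateSignal (w : PMF (K × (ℕ × ℕ) × ℕ)) :
    tv (withSignal w) (garbleLeft (simulateSignal w) (withoutSignal w)) =
      ∑' (c : ℕ) (k : K) (d : ℕ) (c₁ : ℕ),
        |(w (k, (c, c₁), d)).toReal
          - (∑' (k' : K) (d' : ℕ), w (k', (c, c₁), d')).toReal
            * (∑' c₁' : ℕ, w (k, (c, c₁'), d)).toReal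
            / (∑' (k' : K) (c₁' : ℕ) (d' : ℕ), w (k', (c, c₁'), d')).toReal| := by
  simp only [tv_eq_tsum_pair, withSignal_apply, toReal_garbleLeft_simulateSignal_apply]

theorem val_withSignal_le (w : PMF (K × (ℕ × ℕ) × ℕ)) {g : K → ℕ → ℕ → ℝ} {M : ℝ}
    (hg : ∀ k i j, |g k i j| ≤ M) :
    val (withSignal w) g ≤ val (withoutSignal w) g
      + M * tv (withSignal w) (garbleLeft (simulateSignal w) (withoutSignal w)) :=
  (val_le_val_add_mul_tv hg _ _).trans <| add_le_add_left (val_garbleLeft_le hg _ _) _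

end AdditionalSignal

theorem additional_signal_eps_indep_general (K : Type) (ε : ℝ) (w : PMF (K × (ℕ × ℕ) × ℕ))
    (hc₁ : (∑' (c : ℕ) (k : K) (d : ℕ) (c₁ : ℕ),
        |(w (k, (c, c₁), d)).toReal
          - (∑' (k' : K) (d' : ℕ), w (k', (c, c₁), d')).toReal
            * (∑' c₁' : ℕ, w (k, (c, c₁'), d)).toReal
            / (∑' (k' : K) (c₁' : ℕ) (d' : ℕ), w (k', (c, c₁'), d')).toReal|) ≤ ε) :
    (⨆ g : {g : K → ℕ → ℕ → ℝ // IsPayoff g},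
        (val (w.map (fun x => (x.1, Nat.pair x.2.1.1 x.2.1.2, x.2.2))) g.1
          - val (w.map (fun x => (x.1, x.2.1.1, x.2.2))) g.1)) ≤ ε := by
  rw [← tv_withSignal_simulateSignal] at hc₁
  refine Real.iSup_le (fun g => ?_) ((tv_nonneg _ _).trans hc₁)
  have hval := val_withSignal_le w g.2.abs_le_one
  rw [one_mul] at hval
  exact sub_le_iff_le_add'.2 (hval.trans (add_le_add_right hc₁ _))

/-- If under `w ∈ Δ(K × (C×C₁) × D)` the signal `c₁` is `ε`-conditionally
independent from `(k,d)` given `c`, then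
`sup_{g∈𝒢}(val(u,g) − val(v,g)) ≤ ε`, where `u` keeps `(c,c₁)` (encoded in
`ℕ` via `Nat.pair`) and `v = marg_{K×C×D} u`. -/
theorem additional_signal_eps_indep (K : Type) [Fintype K]
    (hK : 2 ≤ Fintype.card K) (ε : ℝ) (w : PMF (K × (ℕ × ℕ) × ℕ))
    (hc₁ : (∑' (c : ℕ) (k : K) (d : ℕ) (c₁ : ℕ),
        |(w (k, (c, c₁), d)).toReal
          - (∑' (k' : K) (d' : ℕ), w (k', (c, c₁), d')).toReal
            * (∑' c₁' : ℕ, w (k, (c, c₁'), d)).toReal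
            / (∑' (k' : K) (c₁' : ℕ) (d' : ℕ), w (k', (c, c₁'), d')).toReal|) ≤ ε) :
    (⨆ g : {g : K → ℕ → ℕ → ℝ // IsPayoff g},
        (val (w.map (fun x => (x.1, Nat.pair x.2.1.1 x.2.1.2, x.2.2))) g.1
          - val (w.map (fun x => (x.1, x.2.1.1, x.2.2))) g.1)) ≤ ε := by
  exact additional_signal_eps_indep_general K ε w hc₁

end ValueDistance
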